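/- For every β ∈ (1,2) the integral ∫_ℝ log|1 − |t|^{−β}| dt converges absolutely and equals 2π·cot(π/β); in particular it is negative. -/

import Mathlib

open MeasureTheory Real

/-!
The integrand is even, so the integral is twice the one over `(0, ∞)`, which splits at `t = 1`.
On `(1, ∞)` it is `log (1 - t ^ (-β))`; on `(0, 1)` it is `-β log t + log (1 - t ^ β)`.
Expanding `-log (1 - x) = ∑ x ^ (n + 1) / (n + 1)` and integrating termwise (all terms are
nonnegative, see `integral_log_one_sub`) gives
`β - ∑ (1 / (n + 1)) * (1 / (β (n + 1) - 1) + 1 / (β (n + 1) + 1))`,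
which is the Mittag-Leffler expansion of `π cot (π z)` at `z = 1 / β` (`hasSum_cot`).
As `π / β ∈ (π / 2, π)`, the cotangent is negative. Integrability comes for free wherever an
integral is known to be nonzero, because a non-integrable function has Bochner integral `0`.
-/

/-- Termwise integration of the logarithmic series of `log (1 - t ^ q)` over a set on which
`t ^ q < 1`, when the moments `∫ t ^ (q (n + 1))` equal `1 / c n` with `c` growing at least
linearly. -/
lemma integral_log_one_sub {S : Set ℝ} (hS : MeasurableSet S) {q k : ℝ} {c : ℕ → ℝ}
    (hk : 0 < k) (hc : ∀ n : ℕ, k * (n + 1) ≤ c n)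
    (hpos : ∀ t ∈ S, 0 < t ∧ t ^ q < 1)
    (hint : ∀ n : ℕ, IntegrableOn (fun t : ℝ => t ^ (q * (n + 1))) S)
    (hval : ∀ n : ℕ, ∫ t in S, t ^ (q * (n + 1)) = 1 / c n) :
    IntegrableOn (fun t : ℝ => log (1 - t ^ q)) S ∧
    HasSum (fun n : ℕ => 1 / c n / (n + 1)) (-∫ t in S, log (1 - t ^ q)) := by
  have hcpos : ∀ n : ℕ, 0 < c n := fun n => lt_of_lt_of_le (by positivity) (hc n)
  have hsum : Summable (fun n : ℕ => 1 / c n / (n + 1)) := by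
    have h2 : Summable (fun n : ℕ => 1 / k * (1 / ((n + 1 : ℕ) : ℝ) ^ 2)) :=
      ((summable_nat_add_iff 1).2 (Real.summable_one_div_nat_pow.2 one_lt_two)).mul_left _
    refine h2.of_nonneg_of_le (fun n => ?_) (fun n => ?_)
    · have := hcpos n
      positivity
    · calc 1 / c n / (n + 1) ≤ 1 / (k * (n + 1)) / (n + 1) := by
            gcongr
            exact hc n
        _ = _ := by
            push_cast
            field_simp
  have hnorm : ∀ n : ℕ, ∫ t in S, ‖t ^ (q * (n + 1)) / (n + 1)‖ = 1 / c n / (n + 1) := by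
    intro n
    rw [← hval n, ← integral_div]
    refine setIntegral_congr_fun hS (fun t ht => ?_)
    have := (hpos t ht).1
    exact Real.norm_of_nonneg (by positivity)
  have key := hasSum_integral_of_summable_integral_norm
    (F := fun (n : ℕ) (t : ℝ) => t ^ (q * (n + 1)) / (n + 1)) (μ := volume.restrict S)
    (fun n => (hint n).div_const _) (by simpa only [hnorm] using hsum)
  have hlog : ∫ t in S, ∑' n : ℕ, t ^ (q * (n + 1)) / ((n : ℝ) + 1)
      = -∫ t in S, log (1 - t ^ q) := by
    rw [← integral_neg]
    refine setIntegral_congr_fun hS (fun t ht => ?_)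
    obtain ⟨h0, h1⟩ := hpos t ht
    have h := hasSum_pow_div_log_of_abs_lt_one (x := t ^ q)
      (by rwa [abs_of_pos (Real.rpow_pos_of_pos h0 _)])
    rw [← h.tsum_eq]
    refine tsum_congr (fun n => ?_)
    rw [← Real.rpow_natCast, ← Real.rpow_mul h0.le]
    push_cast
    rfl
  simp only [integral_div, hval] at key
  rw [hlog] at key
  refine ⟨Integrable.of_integral_ne_zero fun h0 => ?_, key⟩
  -- The series has positive terms, so its sum is nonzero.
  rw [h0, neg_zero] at key
  have hp := hsum.tsum_pos (fun n => (div_pos (one_div_pos.2 (hcpos n)) (by positivity)).le) 0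
    (div_pos (one_div_pos.2 (hcpos 0)) (by positivity))
  rw [key.tsum_eq] at hp
  exact lt_irrefl _ hp

/-- The Mittag-Leffler expansion of `π cot (π z)` at the real point `z = 1 / β`. -/
lemma hasSum_cot {β : ℝ} (h1 : 1 < β) :
    HasSum (fun n : ℕ => 1 / (β * (n + 1) - 1) / (n + 1) + 1 / (β * (n + 1) + 1) / ((n : ℝ) + 1))
      (β - π * Real.cot (π / β)) := by
  have hβ0 : (β : ℂ) ≠ 0 := by exact_mod_cast (by positivity : β ≠ 0)
  have hx : ((1 / β : ℝ) : ℂ) ∈ Complex.integerComplement := by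
    rw [Complex.mem_integerComplement_iff]
    rintro ⟨n, hn⟩
    have hn' : (n : ℝ) = 1 / β := by exact_mod_cast hn
    have ha : (0 : ℝ) < n := by rw [hn']; positivity
    have hb : (n : ℝ) < 1 := by rw [hn', div_lt_one (by linarith)]; exact h1
    have ha' : 0 < n := by exact_mod_cast ha
    have hb' : n < 1 := by exact_mod_cast hb
    omega
  have h := (summable_cotTerm hx).hasSum
  have hr := cot_series_rep' hx
  unfold cotTerm at h
  rw [← hr] at h
  have h' : HasSum (fun n : ℕ => 1 / (1 / β - (n + 1)) + 1 / (1 / β + ((n : ℝ) + 1)))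
      (π * Real.cot (π * (1 / β)) - 1 / (1 / β)) := by
    rw [← Complex.hasSum_ofReal]
    push_cast
    simpa using h
  have h'' := h'.neg
  rw [show -(π * Real.cot (π * (1 / β)) - 1 / (1 / β)) = β - π * Real.cot (π / β) by
    rw [one_div_one_div, mul_one_div]; ring] at h''
  refine h''.congr_fun ?_
  intro n
  have hn : (0 : ℝ) ≤ n := n.cast_nonneg
  have e1 : β * (n + 1) - 1 ≠ 0 := by nlinarith
  have e2 : β * (n + 1) + 1 ≠ 0 := by nlinarith
  have e3 : 1 - β * ((n : ℝ) + 1) ≠ 0 := by nlinarith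
  have e4 : 1 + β * ((n : ℝ) + 1) ≠ 0 := by nlinarith
  have e5 : 1 / β - ((n : ℝ) + 1) = -(β * (n + 1) - 1) / β := by field_simp; ring
  have e6 : 1 / β + ((n : ℝ) + 1) = (β * (n + 1) + 1) / β := by field_simp; ring
  rw [e5, e6]
  field_simp
  ring

lemma integral_log_outer {β : ℝ} (h1 : 1 < β) :
    IntegrableOn (fun t : ℝ => log |1 - t ^ (-β)|) (Set.Ioi 1) ∧
    HasSum (fun n : ℕ => 1 / (β * (n + 1) - 1) / ((n : ℝ) + 1))
      (-∫ t in Set.Ioi 1, log |1 - t ^ (-β)|) := by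
  have hlt : ∀ n : ℕ, -β * ((n : ℝ) + 1) < -1 := fun n => by
    have : (0 : ℝ) ≤ n := n.cast_nonneg
    nlinarith
  simp only [Real.log_abs]
  refine integral_log_one_sub measurableSet_Ioi (k := β - 1) (by linarith) (fun n => ?_)
    (fun t ht => ⟨zero_lt_one.trans ht, Real.rpow_lt_one_of_one_lt_of_neg ht (by linarith)⟩)
    (fun n => integrableOn_Ioi_rpow_of_lt (hlt n) one_pos) (fun n => ?_)
  · have : (0 : ℝ) ≤ n := n.cast_nonneg
    nlinarith
  · rw [integral_Ioi_rpow_of_lt (hlt n) one_pos, Real.one_rpow, ← neg_div_neg_eq]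
    congr 1 <;> ring

lemma integral_log_inner {β : ℝ} (h1 : 1 < β) :
    IntegrableOn (fun t : ℝ => log |1 - t ^ (-β)|) (Set.Ioc 0 1) ∧
    HasSum (fun n : ℕ => 1 / (β * (n + 1) + 1) / ((n : ℝ) + 1))
      (β - ∫ t in Set.Ioc 0 1, log |1 - t ^ (-β)|) := by
  have hgt : ∀ n : ℕ, -1 < β * ((n : ℝ) + 1) := fun n =>
    lt_trans (by norm_num) (show (0 : ℝ) < β * ((n : ℝ) + 1) by positivity)
  obtain ⟨hi, hs⟩ := integral_log_one_sub (S := Set.Ioo 0 1) (q := β) (k := β)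
    (c := fun n : ℕ => β * (n + 1) + 1) measurableSet_Ioo
    (by linarith) (fun n => by linarith)
    (fun t ht => ⟨ht.1, Real.rpow_lt_one ht.1.le ht.2 (by linarith)⟩)
    (fun n => ((intervalIntegrable_iff_integrableOn_Ioo_of_le zero_le_one).1
      (intervalIntegral.intervalIntegrable_rpow' (hgt n))))
    (fun n => by
      rw [← integral_Ioc_eq_integral_Ioo, ← intervalIntegral.integral_of_le zero_le_one,
        integral_rpow (Or.inl (hgt n)), Real.one_rpow, Real.zero_rpow
          (show (0 : ℝ) < β * ((n : ℝ) + 1) + 1 by positivity).ne', sub_zero])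
  have hl : IntegrableOn log (Set.Ioo 0 1) :=
    (intervalIntegrable_iff_integrableOn_Ioo_of_le zero_le_one).1
      intervalIntegral.intervalIntegrable_log'
  have hlv : ∫ t in Set.Ioo (0 : ℝ) 1, log t = -1 := by
    rw [← integral_Ioc_eq_integral_Ioo, ← intervalIntegral.integral_of_le zero_le_one,
      integral_log]
    simp
  have hcongr : Set.EqOn (fun t : ℝ => log |1 - t ^ (-β)|)
      (fun t => -β * log t + log (1 - t ^ β)) (Set.Ioo 0 1) := by
    intro t ht
    have hp : 0 < t ^ β := Real.rpow_pos_of_pos ht.1 _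
    have hq : t ^ β < 1 := Real.rpow_lt_one ht.1.le ht.2 (by linarith)
    have hn : 0 < t ^ (-β) := Real.rpow_pos_of_pos ht.1 _
    have e : 1 - t ^ (-β) = -(t ^ (-β) * (1 - t ^ β)) := by
      rw [mul_sub, ← Real.rpow_add ht.1]
      simp
    simp only [Real.log_abs]
    rw [e, Real.log_neg_eq_log, Real.log_mul hn.ne' (by linarith), Real.log_rpow ht.1]
  constructor
  · rw [integrableOn_Ioc_iff_integrableOn_Ioo, integrableOn_congr_fun hcongr measurableSet_Ioo]
    exact (hl.const_mul _).add hi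
  · rw [integral_Ioc_eq_integral_Ioo, setIntegral_congr_fun measurableSet_Ioo hcongr,
      integral_add (hl.const_mul _) hi, integral_const_mul, hlv]
    convert hs using 1
    ring

/-- For every β ∈ (1,2) the integral ∫ log|1 − |t|^{−β}| dt converges
absolutely and equals 2π·cot(π/β), which is negative. -/
theorem statement10 (β : ℝ) (hβ : β ∈ Set.Ioo (1 : ℝ) 2) :
    Integrable (fun t : ℝ => Real.log |1 - |t| ^ (-β)|) ∧
    ∫ t : ℝ, Real.log |1 - |t| ^ (-β)| = 2 * π * Real.cot (π / β) ∧
    ∫ t : ℝ, Real.log |1 - |t| ^ (-β)| < 0 := by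
  obtain ⟨h1, h2⟩ := hβ
  obtain ⟨ho, hos⟩ := integral_log_outer h1
  obtain ⟨hi, his⟩ := integral_log_inner h1
  have hval : ∫ t : ℝ, Real.log |1 - |t| ^ (-β)| = 2 * π * Real.cot (π / β) := by
    rw [integral_comp_abs (f := fun t => Real.log |1 - t ^ (-β)|),
      ← Set.Ioc_union_Ioi_eq_Ioi zero_le_one,
      setIntegral_union Set.Ioc_disjoint_Ioi_same measurableSet_Ioi hi ho]
    have := (hos.add his).unique (hasSum_cot h1)
    linarith
  have hneg : 2 * π * Real.cot (π / β) < 0 := by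
    have hlo : π / 2 < π / β := div_lt_div_of_pos_left pi_pos (by linarith) h2
    have hhi : π / β < π := div_lt_self pi_pos h1
    have hcos : Real.cos (π / β) < 0 :=
      Real.cos_neg_of_pi_div_two_lt_of_lt hlo (by linarith [pi_pos])
    have hsin : 0 < Real.sin (π / β) := Real.sin_pos_of_pos_of_lt_pi (by linarith [pi_pos]) hhi
    rw [Real.cot_eq_cos_div_sin]
    exact mul_neg_of_pos_of_neg (by positivity) (div_neg_of_neg_of_pos hcos hsin)
  have hneg' := hval ▸ hneg
  exact ⟨Integrable.of_integral_ne_zero hneg'.ne, hval, hneg'⟩
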